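/- For each prime $p$ and $k \ge 1$: $\left(\sum_{J \subseteq \mathbb{Z}_p^k} [\mathbb{Z}_p^k:J]^{-k}\right) \cdot (1-p^{-1})(1-p^{-2})\cdots(1-p^{-k}) = 1$, where the sum is over finite-index $\mathbb{Z}_p$-submodules $J$. -/

import Mathlib

/-!
A submodule `K` of `N × M` is the same thing as its projection `I ⊆ N`, its intersection `J` with
`M`, and a linear map `I → M ⧸ J`, and `[N × M : K] = [N : I] [M : J]`. If `N = R` is a principal
ideal domain, a nonzero ideal `I` is free of rank one, so there are `[M : J]` such maps. Counting
submodules by index therefore gives `ζ_{R × M}(s + 1) = ζ_R(s + 1) ζ_M(s)`, hence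
`ζ_{Rᵏ}(s + k) = ∏_{i = 1}^k ζ_R(s + i)`. Over a discrete valuation ring with residue field of
cardinality `q`, the nonzero ideals are the powers of the maximal ideal and `ζ_R(s)` is the
geometric series `(1 - q⁻ˢ)⁻¹`.
-/

open scoped ENNReal

/-- The term `n⁻ˢ` of a Dirichlet series with nonnegative terms. As for `LSeries.term`, the value
at `n = 0` is `0`, for `s = 0` too, so that submodules of infinite index (which have `index = 0`)
never contribute. -/
noncomputable def dirichletTerm (s : ℝ) (n : ℕ) : ℝ≥0∞ :=
  if n = 0 then 0 else (n : ℝ≥0∞) ^ (-s)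

@[simp]
theorem dirichletTerm_zero (s : ℝ) : dirichletTerm s 0 = 0 := if_pos rfl

theorem dirichletTerm_of_ne_zero (s : ℝ) {n : ℕ} (hn : n ≠ 0) :
    dirichletTerm s n = (n : ℝ≥0∞) ^ (-s) := if_neg hn

@[simp]
theorem dirichletTerm_one (s : ℝ) : dirichletTerm s 1 = 1 := by
  simp [dirichletTerm]

theorem dirichletTerm_mul (s : ℝ) (m n : ℕ) :
    dirichletTerm s (m * n) = dirichletTerm s m * dirichletTerm s n := by
  rcases eq_or_ne m 0 with rfl | hm
  · simp
  rcases eq_or_ne n 0 with rfl | hn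
  · simp
  simp only [dirichletTerm, mul_eq_zero, hm, hn, or_self, if_false, Nat.cast_mul]
  exact ENNReal.mul_rpow_of_ne_top (ENNReal.natCast_ne_top m) (ENNReal.natCast_ne_top n) _

theorem card_mul_dirichletTerm_add_one (α : Type*) (s : ℝ) :
    (ENat.card α : ℝ≥0∞) * dirichletTerm (s + 1) (Nat.card α) = dirichletTerm s (Nat.card α) := by
  rcases eq_or_ne (Nat.card α) 0 with h | h
  · simp [h]
  have : Finite α := Nat.finite_of_card_ne_zero h
  have h₀ : (Nat.card α : ℝ≥0∞) ≠ 0 := Nat.cast_ne_zero.2 h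
  rw [ENat.card_eq_coe_natCard, dirichletTerm_of_ne_zero _ h, dirichletTerm_of_ne_zero _ h,
    ENat.toENNReal_coe]
  calc (Nat.card α : ℝ≥0∞) * (Nat.card α : ℝ≥0∞) ^ (-(s + 1))
      = (Nat.card α : ℝ≥0∞) ^ (1 + -(s + 1)) := by
        rw [ENNReal.rpow_add _ _ h₀ (ENNReal.natCast_ne_top _), ENNReal.rpow_one]
    _ = (Nat.card α : ℝ≥0∞) ^ (-s) := by ring_nf

theorem dirichletTerm_ne_top (s : ℝ) (n : ℕ) : dirichletTerm s n ≠ ∞ := by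
  rcases eq_or_ne n 0 with rfl | hn
  · simp
  simp [dirichletTerm_of_ne_zero s hn, ENNReal.rpow_eq_top_iff, hn]

theorem toReal_dirichletTerm {s : ℝ} (hs : s ≠ 0) (n : ℕ) :
    (dirichletTerm s n).toReal = (n : ℝ) ^ (-s) := by
  rcases eq_or_ne n 0 with rfl | hn
  · simp [Real.zero_rpow (neg_ne_zero.2 hs)]
  simp [dirichletTerm_of_ne_zero s hn, ← ENNReal.toReal_rpow]

theorem index_eq_index_map_fst_mul_index_comap_inr {G H : Type*} [AddCommGroup G] [AddCommGroup H]
    (K : AddSubgroup (G × H)) :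
    K.index = (K.map (AddMonoidHom.fst G H)).index * (K.comap (AddMonoidHom.inr G H)).index := by
  have range_inr : (AddMonoidHom.inr G H).range = (AddMonoidHom.fst G H).ker := by
    ext ⟨g, h⟩
    simp [AddMonoidHom.mem_ker, eq_comm, -AddMonoidHom.ker_fst]
  have range_fst : (AddMonoidHom.fst G H).range = ⊤ :=
    AddMonoidHom.range_eq_top.2 Prod.fst_surjective
  rw [AddSubgroup.index_map, range_fst, AddSubgroup.index_top, mul_one, AddSubgroup.index_comap,
    range_inr, ← AddSubgroup.relIndex_sup_left, mul_comm,
    AddSubgroup.relIndex_mul_index le_sup_left]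

theorem index_bot_of_infinite {R M : Type*} [Ring R] [AddCommGroup M] [Module R M] [Infinite M] :
    (⊥ : Submodule R M).toAddSubgroup.index = 0 :=
  AddSubgroup.index_bot.trans Nat.card_eq_zero_of_infinite

section Goursat

variable {R N M : Type*} [Ring R] [AddCommGroup N] [Module R N] [AddCommGroup M] [Module R M]

/-- The submodule `{(n, m) | n ∈ I, f n = m mod J}` of `N × M` attached to a submodule `J` of `M`
and a linear map `f : I → M ⧸ J` on a submodule `I` of `N`; the pair `(I, f)` is encoded as a
partially defined linear map with domain `I`. -/
def goursatSubmodule (J : Submodule R M) (f : N →ₗ.[R] M ⧸ J) : Submodule R (N × M) :=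
  f.graph.comap (LinearMap.id.prodMap J.mkQ)

theorem id_prodMap_mkQ_surjective (J : Submodule R M) :
    Function.Surjective (LinearMap.id.prodMap J.mkQ : N × M →ₗ[R] N × M ⧸ J) :=
  Function.surjective_id.prodMap J.mkQ_surjective

theorem map_fst_goursatSubmodule (J : Submodule R M) (f : N →ₗ.[R] M ⧸ J) :
    (goursatSubmodule J f).map (LinearMap.fst R N M) = f.domain := by
  rw [← f.graph_map_fst_eq_domain,
    ← Submodule.map_comap_eq_of_surjective (id_prodMap_mkQ_surjective J) f.graph,
    ← Submodule.map_comp]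
  rfl

theorem comap_inr_goursatSubmodule (J : Submodule R M) (f : N →ₗ.[R] M ⧸ J) :
    (goursatSubmodule J f).comap (LinearMap.inr R N M) = J := by
  ext m
  have mem_graph : ((0 : N), J.mkQ m) ∈ f.graph ↔ J.mkQ m = 0 :=
    ⟨fun h ↦ f.graph_fst_eq_zero_snd h rfl, fun h ↦ h ▸ f.graph.zero_mem⟩
  simpa [goursatSubmodule] using mem_graph

theorem index_goursatSubmodule (J : Submodule R M) (f : N →ₗ.[R] M ⧸ J) :
    (goursatSubmodule J f).toAddSubgroup.index =
      f.domain.toAddSubgroup.index * J.toAddSubgroup.index := by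
  calc (goursatSubmodule J f).toAddSubgroup.index
      = ((goursatSubmodule J f).map (LinearMap.fst R N M)).toAddSubgroup.index *
          ((goursatSubmodule J f).comap (LinearMap.inr R N M)).toAddSubgroup.index :=
        index_eq_index_map_fst_mul_index_comap_inr _
    _ = f.domain.toAddSubgroup.index * J.toAddSubgroup.index := by
        rw [map_fst_goursatSubmodule, comap_inr_goursatSubmodule]

theorem exists_goursatSubmodule_eq (K : Submodule R (N × M)) :
    ∃ (J : Submodule R M) (f : N →ₗ.[R] M ⧸ J), goursatSubmodule J f = K := by
  set J := K.comap (LinearMap.inr R N M)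
  set π : N × M →ₗ[R] N × M ⧸ J := LinearMap.id.prodMap J.mkQ
  have ker_le : LinearMap.ker π ≤ K := by
    rintro ⟨n, m⟩ h
    obtain ⟨rfl, hm⟩ : n = 0 ∧ m ∈ J := by simpa [π] using h
    exact hm
  have single_valued : ∀ x ∈ K.map π, x.1 = 0 → x.2 = 0 := by
    rintro _ ⟨⟨n, m⟩, hK, rfl⟩ (rfl : n = 0)
    exact (Submodule.Quotient.mk_eq_zero J).2 hK
  refine ⟨J, (K.map π).toLinearPMap, ?_⟩
  rw [goursatSubmodule, Submodule.toLinearPMap_graph_eq _ single_valued]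
  exact Submodule.comap_map_eq_self ker_le

theorem goursatSubmodule_bijective :
    Function.Bijective fun x : Σ J : Submodule R M, N →ₗ.[R] M ⧸ J ↦ goursatSubmodule x.1 x.2 := by
  constructor
  · rintro ⟨J, f⟩ ⟨J', f'⟩ (h : goursatSubmodule J f = goursatSubmodule J' f')
    obtain rfl : J = J' := by
      rw [← comap_inr_goursatSubmodule J f, h, comap_inr_goursatSubmodule]
    have graph_eq : f.graph = f'.graph :=
      Submodule.comap_injective_of_surjective (id_prodMap_mkQ_surjective J) h
    rw [LinearPMap.eq_of_eq_graph graph_eq]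
  · intro K
    obtain ⟨J, f, h⟩ := exists_goursatSubmodule_eq K
    exact ⟨⟨J, f⟩, h⟩

/-- A partially defined linear map as a submodule together with a linear map on it. -/
def linearPMapEquivSigma : (N →ₗ.[R] M) ≃ Σ I : Submodule R N, I →ₗ[R] M where
  toFun f := ⟨f.domain, f.toFun⟩
  invFun x := ⟨x.1, x.2⟩

theorem tsum_linearPMap_domain (g : Submodule R N → ℝ≥0∞) :
    ∑' f : N →ₗ.[R] M, g f.domain = ∑' I : Submodule R N, ENat.card (I →ₗ[R] M) * g I := by
  rw [← linearPMapEquivSigma.symm.tsum_eq, ENNReal.tsum_sigma']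
  exact tsum_congr fun I ↦ ENNReal.tsum_const (g I)

end Goursat

theorem card_linearMap_of_isPrincipal {R M : Type*} [CommRing R] [IsDomain R] [AddCommGroup M]
    [Module R M] {I : Ideal R} [I.IsPrincipal] (hI : I ≠ ⊥) :
    ENat.card (I →ₗ[R] M) = ENat.card M :=
  ENat.card_congr (((Ideal.isoBaseOfIsPrincipal hI).symm.congrLeft M R).trans
    (LinearMap.ringLmapEquivSelf R R M)).toEquiv

/-- Solomon's zeta function `∑_J [M : J]⁻ˢ` of an `R`-module `M`, the sum being over the submodules
of finite index; it takes values in `ℝ≥0∞`, so that no convergence has to be tracked. -/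
noncomputable def submoduleZeta (R M : Type*) [Ring R] [AddCommGroup M] [Module R M] (s : ℝ) :
    ℝ≥0∞ :=
  ∑' J : Submodule R M, dirichletTerm s J.toAddSubgroup.index

section Ring

variable {R N M : Type*} [Ring R] [AddCommGroup N] [Module R N] [AddCommGroup M] [Module R M]

theorem toReal_submoduleZeta {s : ℝ} (hs : s ≠ 0) :
    (submoduleZeta R M s).toReal = ∑' J : Submodule R M, (J.toAddSubgroup.index : ℝ) ^ (-s) := by
  rw [submoduleZeta, ENNReal.tsum_toReal_eq fun _ ↦ dirichletTerm_ne_top _ _]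
  exact tsum_congr fun _ ↦ toReal_dirichletTerm hs _

theorem submoduleZeta_of_subsingleton [Subsingleton M] (s : ℝ) : submoduleZeta R M s = 1 := by
  rw [submoduleZeta, tsum_eq_single ⊤ fun J hJ ↦ (hJ (Subsingleton.elim J ⊤)).elim]
  simp

theorem submoduleZeta_congr (e : M ≃ₗ[R] N) (s : ℝ) :
    submoduleZeta R M s = submoduleZeta R N s := by
  rw [submoduleZeta, submoduleZeta, ← (Submodule.orderIsoMapComap e).toEquiv.tsum_eq]
  refine tsum_congr fun J ↦ congrArg (dirichletTerm s) ?_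
  exact (J.toAddSubgroup.index_map_equiv e.toAddEquiv).symm

theorem submoduleZeta_prod_eq_tsum (s : ℝ) :
    submoduleZeta R (N × M) s =
      ∑' (J : Submodule R M) (I : Submodule R N), ENat.card (I →ₗ[R] M ⧸ J) *
        (dirichletTerm s I.toAddSubgroup.index * dirichletTerm s J.toAddSubgroup.index) := by
  rw [submoduleZeta, ← (Equiv.ofBijective _ goursatSubmodule_bijective).tsum_eq,
    ENNReal.tsum_sigma']
  refine tsum_congr fun J ↦ ?_
  rw [← tsum_linearPMap_domain]
  refine tsum_congr fun f ↦ ?_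
  rw [Equiv.ofBijective_apply, index_goursatSubmodule, dirichletTerm_mul]

end Ring

section PrincipalIdealRing

variable {R : Type*} [CommRing R] [IsDomain R] [IsPrincipalIdealRing R] [Infinite R]

theorem card_linearMap_mul_dirichletTerm_index {M : Type*} [AddCommGroup M] [Module R M]
    (I : Ideal R) (s : ℝ) :
    ENat.card (I →ₗ[R] M) * dirichletTerm s I.toAddSubgroup.index =
      ENat.card M * dirichletTerm s I.toAddSubgroup.index := by
  rcases eq_or_ne I ⊥ with rfl | hI
  · rw [index_bot_of_infinite, dirichletTerm_zero, mul_zero, mul_zero]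
  · rw [card_linearMap_of_isPrincipal hI]

theorem submoduleZeta_prod {M : Type*} [AddCommGroup M] [Module R M] (s : ℝ) :
    submoduleZeta R (R × M) (s + 1) = submoduleZeta R R (s + 1) * submoduleZeta R M s := by
  rw [submoduleZeta_prod_eq_tsum, submoduleZeta, submoduleZeta, ← ENNReal.tsum_mul_left]
  refine tsum_congr fun J ↦ ?_
  rw [← ENNReal.tsum_mul_right]
  refine tsum_congr fun I ↦ ?_
  have card_mul : (ENat.card (M ⧸ J) : ℝ≥0∞) * dirichletTerm (s + 1) J.toAddSubgroup.index =
      dirichletTerm s J.toAddSubgroup.index := card_mul_dirichletTerm_add_one (M ⧸ J) s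
  rw [← mul_assoc, card_linearMap_mul_dirichletTerm_index, mul_right_comm, card_mul, mul_comm]

theorem submoduleZeta_pi (k : ℕ) (s : ℝ) :
    submoduleZeta R (Fin k → R) (s + k) = ∏ i ∈ Finset.Icc 1 k, submoduleZeta R R (s + i) := by
  induction k with
  | zero => simp [submoduleZeta_of_subsingleton]
  | succ k ih =>
    rw [← submoduleZeta_congr (Fin.consLinearEquiv R fun _ : Fin (k + 1) ↦ R), Nat.cast_succ,
      ← add_assoc, submoduleZeta_prod, ih, Finset.prod_Icc_succ_top (by lia), mul_comm,
      Nat.cast_succ, add_assoc]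

end PrincipalIdealRing

section DiscreteValuationRing

open IsLocalRing

variable {R : Type*} [CommRing R] [IsDomain R] [IsDiscreteValuationRing R]

theorem index_maximalIdeal_pow (n : ℕ) :
    (maximalIdeal R ^ n).toAddSubgroup.index = Nat.card (ResidueField R) ^ n :=
  cardQuot_pow_of_prime (IsDiscreteValuationRing.not_a_field R)

theorem infinite_of_isDiscreteValuationRing : Infinite R :=
  not_finite_iff_infinite.1 fun _ ↦
    IsDiscreteValuationRing.not_isField R (Finite.isField_of_domain R)

theorem dirichletTerm_index_maximalIdeal_pow [Finite (ResidueField R)] (s : ℝ) (n : ℕ) :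
    dirichletTerm s (maximalIdeal R ^ n).toAddSubgroup.index =
      ((Nat.card (ResidueField R) : ℝ≥0∞) ^ (-s)) ^ n := by
  rw [index_maximalIdeal_pow, dirichletTerm_of_ne_zero s (pow_ne_zero n Nat.card_pos.ne'),
    Nat.cast_pow, ← ENNReal.rpow_natCast, ← ENNReal.rpow_mul, mul_comm, ENNReal.rpow_mul,
    ENNReal.rpow_natCast]

theorem submoduleZeta_self_of_isDiscreteValuationRing [Finite (ResidueField R)] (s : ℝ) :
    submoduleZeta R R s = (1 - (Nat.card (ResidueField R) : ℝ≥0∞) ^ (-s))⁻¹ := by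
  have : Infinite R := infinite_of_isDiscreteValuationRing
  have pow_injective : Function.Injective fun n : ℕ ↦ maximalIdeal R ^ n :=
    (Ideal.pow_right_strictAnti _ (IsDiscreteValuationRing.not_a_field R)
      Ideal.IsPrime.ne_top').injective
  have support_subset : (Function.support fun I : Ideal R ↦
      dirichletTerm s I.toAddSubgroup.index) ⊆ Set.range fun n : ℕ ↦ maximalIdeal R ^ n := by
    intro I hI
    have I_ne_bot : I ≠ ⊥ := by
      rintro rfl
      exact hI ((congrArg _ index_bot_of_infinite).trans (dirichletTerm_zero s))
    obtain ⟨n, hn⟩ := exists_maximalIdeal_pow_eq_of_principal R inferInstance I I_ne_bot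
    exact ⟨n, hn.symm⟩
  calc submoduleZeta R R s
      = ∑' n : ℕ, dirichletTerm s (maximalIdeal R ^ n).toAddSubgroup.index :=
        (pow_injective.tsum_eq support_subset).symm
    _ = ∑' n : ℕ, ((Nat.card (ResidueField R) : ℝ≥0∞) ^ (-s)) ^ n :=
        tsum_congr (dirichletTerm_index_maximalIdeal_pow s)
    _ = (1 - (Nat.card (ResidueField R) : ℝ≥0∞) ^ (-s))⁻¹ := ENNReal.tsum_geometric _

theorem submoduleZeta_pi_of_isDiscreteValuationRing [Finite (ResidueField R)] (k : ℕ) (s : ℝ) :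
    submoduleZeta R (Fin k → R) (s + k) =
      ∏ i ∈ Finset.Icc 1 k, (1 - (Nat.card (ResidueField R) : ℝ≥0∞) ^ (-(s + i)))⁻¹ := by
  have : Infinite R := infinite_of_isDiscreteValuationRing
  simp only [submoduleZeta_pi, submoduleZeta_self_of_isDiscreteValuationRing]

end DiscreteValuationRing

theorem toReal_inv_one_sub_rpow_neg {x : ℝ≥0∞} (hx : 1 ≤ x) {t : ℝ} (ht : 0 < t) :
    ((1 - x ^ (-t))⁻¹).toReal = (1 - x.toReal ^ (-t))⁻¹ := by
  have rpow_le_one : x ^ (-t) ≤ 1 := by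
    simpa [ENNReal.rpow_neg] using ENNReal.one_le_rpow hx ht
  rw [ENNReal.toReal_inv, ENNReal.toReal_sub_of_le rpow_le_one ENNReal.one_ne_top,
    ENNReal.toReal_one, ENNReal.toReal_rpow]

theorem stmt16_general (R : Type*) [CommRing R] [IsDomain R] [IsDiscreteValuationRing R]
    [Finite (IsLocalRing.ResidueField R)] (k : ℕ) {s : ℝ} (hs : -1 < s) :
    (∑' J : Submodule R (Fin k → R), (J.toAddSubgroup.index : ℝ) ^ (-(s + k))) *
      ∏ i ∈ Finset.Icc 1 k, (1 - (Nat.card (IsLocalRing.ResidueField R) : ℝ) ^ (-(s + i))) = 1 := by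
  rcases k.eq_zero_or_pos with rfl | hk
  · simp [← Unique.eq_default (⊤ : Submodule R (Fin 0 → R))]
  have exponent_pos : ∀ {i : ℕ}, 1 ≤ i → 0 < s + i := fun {i} hi ↦ by
    have : (1 : ℝ) ≤ i := Nat.one_le_cast.2 hi
    linarith
  have one_lt_card : 1 < Nat.card (IsLocalRing.ResidueField R) := Finite.one_lt_card
  rw [← toReal_submoduleZeta (exponent_pos hk).ne', submoduleZeta_pi_of_isDiscreteValuationRing,
    ENNReal.toReal_prod, ← Finset.prod_mul_distrib]
  refine Finset.prod_eq_one fun i hi ↦ ?_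
  have hi : 0 < s + i := exponent_pos (Finset.mem_Icc.1 hi).1
  have rpow_lt_one : (Nat.card (IsLocalRing.ResidueField R) : ℝ) ^ (-(s + i)) < 1 :=
    Real.rpow_lt_one_of_one_lt_of_neg (Nat.one_lt_cast.2 one_lt_card) (neg_neg_of_pos hi)
  rw [toReal_inv_one_sub_rpow_neg (Nat.one_le_cast.2 one_lt_card.le) hi, ENNReal.toReal_natCast]
  exact inv_mul_cancel₀ (sub_pos.2 rpow_lt_one).ne'

theorem card_residueField_padicInt (p : ℕ) [Fact p.Prime] :
    Nat.card (IsLocalRing.ResidueField ℤ_[p]) = p :=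
  (Nat.card_congr PadicInt.residueField.toEquiv).trans (Nat.card_zmod p)

instance finite_residueField_padicInt (p : ℕ) [Fact p.Prime] :
    Finite (IsLocalRing.ResidueField ℤ_[p]) :=
  .of_equiv (ZMod p) PadicInt.residueField.symm.toEquiv

/-- For each prime `p` and `k ≥ 1`:
`(∑_J [ℤ_p^k : J]^{-k}) · (1 - p⁻¹)(1 - p⁻²) ⋯ (1 - p⁻ᵏ) = 1`, the sum being over all
finite-index `ℤ_p`-submodules `J ⊆ ℤ_p^k` (submodules of infinite index have
`index = 0` and contribute `0`). -/
theorem stmt16 (p k : ℕ) [Fact p.Prime] (hk : 1 ≤ k) :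
    (∑' J : Submodule ℤ_[p] (Fin k → ℤ_[p]),
        ((J.toAddSubgroup.index : ℝ) ^ (-(k : ℤ)))) *
      ∏ i ∈ Finset.Icc 1 k, (1 - (p : ℝ) ^ (-(i : ℤ))) = 1 := by
  simpa [card_residueField_padicInt, Real.rpow_neg] using
    stmt16_general ℤ_[p] k (s := 0) neg_one_lt_zero
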